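/- Let σ : ℝ → ℝ be expressive, fix k ≥ 0, and let P be the first index with P ≥ k and Σ^{(P)}(0) ≠ 0 (so P ∈ {k, k+1}), where Σ is the Gaussian smoothing of σ. Let Σ_n := Σ_{1-k/n}, a_{ν,n} := Σ_n^{(ν)}(0)/ν!, and let w_1,…,w_k, b be i.i.d. N(0,1/n), x uniform on {±1}^k, G = Σ_{i=1}^k w_i x_i + b, M(x) = ∏_{i=1}^k x_i. Then, conditionally on any fixed signs τ = sign(w) and sign(b), Σ_{ν=0}^P a_{ν,n} · E[M(x)·G^ν] = C(P)·(−1)^{C'(τ, sign(b))}·n^{-P/2} + O(n^{-P/2 - 1/2}), where C(P) ≠ 0 is a constant independent of n and C'(τ, sign(b)) ∈ ℤ depends only on the signs; the O-bound is uniform over the signs. -/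

import Mathlib

open MeasureTheory ProbabilityTheory Filter Finset Asymptotics
open scoped NNReal ENNReal

noncomputable section

/-- The ±1 value encoded by a Boolean bit. -/
def bsign (b : Bool) : ℝ := if b then 1 else -1

/-- Expectation over a uniformly random point of the Boolean cube `{±1}^n`. -/
def bExp (n : ℕ) (g : (Fin n → Bool) → ℝ) : ℝ :=
  (∑ x : Fin n → Bool, g x) / 2 ^ n

/-- A function on the Boolean cube is Boolean(-valued) if it takes values in `{±1}`. -/
def IsBooleanFn {n : ℕ} (f : (Fin n → Bool) → ℝ) : Prop := ∀ x, f x = 1 ∨ f x = -1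

/-- Initialization distribution: the weights `w : ℝⁿ` and the bias `b` are
iid `N(0, 1/n)` Gaussians. -/
def initMeasure (n : ℕ) : Measure ((Fin n → ℝ) × ℝ) :=
  (Measure.pi fun _ : Fin n => gaussianReal 0 (n : ℝ≥0)⁻¹).prod (gaussianReal 0 (n : ℝ≥0)⁻¹)

/-- Initial alignment `INAL(f, σ) = E_{w,b} [ (E_x [f(x) σ(wᵀx + b)])² ]`. -/
def INAL (n : ℕ) (f : (Fin n → Bool) → ℝ) (σ : ℝ → ℝ) : ℝ :=
  ∫ θ : (Fin n → ℝ) × ℝ,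
    (bExp n fun x => f x * σ (∑ i, θ.1 i * bsign (x i) + θ.2)) ^ 2 ∂ initMeasure n

/-- The `v`-Gaussian smoothing `Σ_v(t) = E_{Y ∼ N(0,v)} [σ(Y + t)]`. -/
def gsmooth (σ : ℝ → ℝ) (v : ℝ) (t : ℝ) : ℝ :=
  ∫ y, σ (y + t) ∂ gaussianReal 0 v.toNNReal

/-- `σ` is polynomially bounded: `|σ(x)| ≤ C |x|^c + C` for some `C, c > 0`. -/
def PolyBounded (σ : ℝ → ℝ) : Prop :=
  ∃ C : ℝ, 0 < C ∧ ∃ c : ℕ, 0 < c ∧ ∀ x : ℝ, |σ x| ≤ C * |x| ^ c + C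

/-- `σ` is expressive: measurable, polynomially bounded, and its Gaussian smoothing has no
two consecutive vanishing derivatives at `0`. -/
def Expressive (σ : ℝ → ℝ) : Prop :=
  Measurable σ ∧ PolyBounded σ ∧
    ∀ m : ℕ, iteratedDeriv m (gsmooth σ 1) 0 ≠ 0 ∨ iteratedDeriv (m + 1) (gsmooth σ 1) 0 ≠ 0

/-- A nonnegative sequence is negligible if it decays faster than any inverse polynomial. -/
def Negligible (g : ℕ → ℝ) : Prop :=
  ∀ c : ℕ, Tendsto (fun n : ℕ => (n : ℝ) ^ c * g n) atTop (nhds 0)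

/-- Fourier character `M_S(x) = ∏_{i ∈ S} x_i`. -/
def chi {n : ℕ} (S : Finset (Fin n)) (x : Fin n → Bool) : ℝ := ∏ i ∈ S, bsign (x i)

/-- Fourier coefficient `f̂(S) = E_x [f(x) M_S(x)]`. -/
def fourierCoef (n : ℕ) (f : (Fin n → Bool) → ℝ) (S : Finset (Fin n)) : ℝ :=
  bExp n fun x => f x * chi S x

/-- Fourier weight up to degree `k`: `W^{≤k}(f)`. -/
def weightLE (n k : ℕ) (f : (Fin n → Bool) → ℝ) : ℝ :=
  ∑ S ∈ Finset.univ.filter (fun S : Finset (Fin n) => S.card ≤ k), fourierCoef n f S ^ 2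

/-- Fourier weight strictly below degree `k`: `W^{<k}(f)`. -/
def weightLT (n k : ℕ) (f : (Fin n → Bool) → ℝ) : ℝ :=
  ∑ S ∈ Finset.univ.filter (fun S : Finset (Fin n) => S.card < k), fourierCoef n f S ^ 2

/-- The monomial `M_k(x) = ∏_{i=1}^k x_i`, viewed as a function on `{±1}^n`. -/
def monomial (n k : ℕ) : (Fin n → Bool) → ℝ :=
  fun x => ∏ i ∈ Finset.univ.filter (fun i : Fin n => (i : ℕ) < k), bsign (x i)

/-- The `N`-extension of `f : {±1}^n → ℝ` (for `n ≤ N`): ignore the last `N - n` coordinates. -/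
def extendFn (n N : ℕ) (f : (Fin n → Bool) → ℝ) : (Fin N → Bool) → ℝ :=
  fun x => f fun i => if h : (i : ℕ) < N then x ⟨i, h⟩ else false

/-- Cross-predictability of (the uniform distribution on) the orbit of `f` under coordinate
permutations, with uniform inputs: `CP(orb(f), U^N)`. -/
def orbitCP (N : ℕ) (f : (Fin N → Bool) → ℝ) : ℝ :=
  (∑ π : Equiv.Perm (Fin N), ∑ π' : Equiv.Perm (Fin N),
      (bExp N fun x => f (fun i => x (π i)) * f (fun i => x (π' i))) ^ 2) /
    (Fintype.card (Equiv.Perm (Fin N))) ^ 2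

/-- `N = n^{1+ε}` (rounded up). -/
def Ndim (ε : ℝ) (n : ℕ) : ℕ := ⌈(n : ℝ) ^ (1 + ε)⌉₊

/-- The distribution of `(|w_1|, …, |w_k|, |b|)` is generated from `k + 1` iid `N(0, 1/n)`
variables (of which we take absolute values below). -/
def weightMeasure (n k : ℕ) : Measure ((Fin k → ℝ) × ℝ) :=
  (Measure.pi fun _ : Fin k => gaussianReal 0 (n : ℝ≥0)⁻¹).prod (gaussianReal 0 (n : ℝ≥0)⁻¹)

/-- `G = Σ_{i=1}^k τ_i |w_i| x_i + s |b|`, i.e. `Σ w_i x_i + b` conditioned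
on `sign(w_i) = τ_i` and `sign(b) = s`. -/
def Gval (k : ℕ) (τ : Fin k → ℝ) (s : ℝ) (g : (Fin k → ℝ) × ℝ) (x : Fin k → Bool) : ℝ :=
  ∑ i, τ i * |g.1 i| * bsign (x i) + s * |g.2|

/-- The conditional expectation `E[M_k(x) · F(G) | sign(w) = τ, sign(b) = s]`,
taken over `|w_1|, …, |w_k|, |b|` and uniform `x ∈ {±1}^k`. -/
def condExpFn (n k : ℕ) (τ : Fin k → ℝ) (s : ℝ) (F : ℝ → ℝ) : ℝ :=
  ∫ g : (Fin k → ℝ) × ℝ,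
    (bExp k fun x => (∏ i, bsign (x i)) * F (Gval k τ s g x)) ∂ weightMeasure n k

/-- The conditional moment `E[M_k(x) · G^ν | sign(w) = τ, sign(b) = s]`. -/
def condMoment (n k : ℕ) (τ : Fin k → ℝ) (s : ℝ) (ν : ℕ) : ℝ :=
  condExpFn n k τ s fun z => z ^ ν

/-- `s` is a sign. -/
def IsSign (s : ℝ) : Prop := s = 1 ∨ s = -1

/-- The degree-`P` Taylor remainder of the `v`-Gaussian smoothing `Σ_v` at `0`:
`R(z) = Σ_v(z) − Σ_{ν=0}^P Σ_v^{(ν)}(0)/ν! · z^ν`. -/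
def taylorRem (σ : ℝ → ℝ) (v : ℝ) (P : ℕ) (z : ℝ) : ℝ :=
  gsmooth σ v z -
    ∑ ν ∈ Finset.range (P + 1),
      iteratedDeriv ν (gsmooth σ v) 0 / (ν.factorial : ℝ) * z ^ ν

lemma bExp_succ_cons (k : ℕ) (g : (Fin (k+1) → Bool) → ℝ) :
    bExp (k+1) g = (bExp k (fun x => g (Fin.cons true x)) + bExp k (fun x => g (Fin.cons false x))) / 2 := by
  unfold bExp
  have h : ∑ x : Fin (k+1) → Bool, g x = ∑ p : Bool × (Fin k → Bool), g (Fin.cons p.1 p.2) :=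
    (Fintype.sum_equiv (Fin.consEquiv (fun _ : Fin (k+1) => Bool)) _ _ (fun p => rfl)).symm
  rw [h, Fintype.sum_prod_type]
  simp only [Fintype.sum_bool]
  rw [pow_succ]
  field_simp

/-- cube moments -/
def Aval (k : ℕ) (c : Fin k → ℝ) (d : ℝ) (ν : ℕ) : ℝ :=
  bExp k fun x => (∏ i, bsign (x i)) * (∑ i, c i * bsign (x i) + d) ^ ν

lemma bExp_sum_mul {ι : Type*} (k : ℕ) (S : Finset ι) (a : ι → ℝ) (g : ι → (Fin k → Bool) → ℝ) :
    bExp k (fun x => ∑ j ∈ S, a j * g j x) = ∑ j ∈ S, a j * bExp k (g j) := by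
  unfold bExp
  rw [Finset.sum_comm, Finset.sum_div]
  refine Finset.sum_congr rfl fun j _ => ?_
  rw [← Finset.mul_sum, mul_div_assoc]

lemma Aval_succ (k : ℕ) (c : Fin (k+1) → ℝ) (d : ℝ) (ν : ℕ) :
    Aval (k+1) c d ν = ∑ j ∈ Finset.range (ν+1),
      (c 0 ^ j * ((1 - (-1) ^ j) / 2) * (ν.choose j : ℝ)) * Aval k (fun i => c i.succ) d (ν - j) := by
  unfold Aval
  rw [bExp_succ_cons]
  have key : ∀ e : Bool, (bExp k fun x : Fin k → Bool =>
      (∏ i, bsign ((Fin.cons e x : Fin (k+1) → Bool) i)) *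
        (∑ i, c i * bsign ((Fin.cons e x : Fin (k+1) → Bool) i) + d) ^ ν) =
      ∑ j ∈ Finset.range (ν+1), (c 0 ^ j * bsign e ^ (j+1) * (ν.choose j : ℝ)) *
        bExp k fun x => (∏ i, bsign (x i)) * (∑ i, c i.succ * bsign (x i) + d) ^ (ν - j) := by
    intro e
    rw [← bExp_sum_mul]
    congr 1
    funext x
    rw [Fin.prod_univ_succ, Fin.sum_univ_succ]
    simp only [Fin.cons_zero, Fin.cons_succ]
    rw [add_assoc, add_pow, Finset.mul_sum]
    refine Finset.sum_congr rfl fun j _ => ?_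
    rw [mul_pow]
    ring
  rw [key, key, ← Finset.sum_add_distrib, Finset.sum_div]
  refine Finset.sum_congr rfl fun j _ => ?_
  simp only [bsign]
  norm_num
  ring

lemma Aval_main (k : ℕ) : ∀ (c : Fin k → ℝ) (d : ℝ),
    (∀ ν < k, Aval k c d ν = 0) ∧ Aval k c d k = (k.factorial : ℝ) * ∏ i, c i ∧
      Aval k c d (k+1) = ((k+1).factorial : ℝ) * ((∏ i, c i) * d) := by
  induction k with
  | zero => intro c d; simp [Aval, bExp]
  | succ k ih =>
    intro c d
    obtain ⟨h0, h1, h2⟩ := ih (fun i => c i.succ) d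
    refine ⟨fun ν hν => ?_, ?_, ?_⟩
    · rw [Aval_succ]
      refine Finset.sum_eq_zero fun j hj => ?_
      rcases Nat.eq_zero_or_pos j with rfl | hj0
      · simp
      · rw [h0 _ (by have := Finset.mem_range.1 hj; omega), mul_zero]
    · rw [Aval_succ, Finset.sum_eq_single 1]
      · rw [Nat.add_sub_cancel, h1, Fin.prod_univ_succ, Nat.factorial_succ]
        push_cast [Nat.choose_one_right]
        ring
      · intro j hj hj1
        rcases Nat.eq_zero_or_pos j with rfl | hj0
        · simp
        · rw [h0 _ (by have := Finset.mem_range.1 hj; omega), mul_zero]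
      · intro h; simp at h
    · rw [Aval_succ, Finset.sum_eq_single 1]
      · rw [Nat.add_sub_cancel, h2, Fin.prod_univ_succ, Nat.factorial_succ (k+1)]
        push_cast [Nat.choose_one_right]
        ring
      · intro j hj hj1
        rcases Nat.eq_zero_or_pos j with rfl | hj0
        · simp
        · rcases eq_or_ne j 2 with rfl | hj2
          · simp
          · rw [h0 _ (by have := Finset.mem_range.1 hj; omega), mul_zero]
      · intro h; simp at h

/-- absolute first moment of the standard Gaussian -/
def mAbs : ℝ := ∫ y, |y| ∂ gaussianReal 0 1

lemma mAbs_pos : 0 < mAbs := by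
  have hint : Integrable (fun y : ℝ => |y|) (gaussianReal 0 1) := by
    have := (memLp_id_gaussianReal (μ := 0) (v := 1) 1).integrable (by simp)
    exact this.abs
  unfold mAbs
  rw [integral_pos_iff_support_of_nonneg (fun y => abs_nonneg y) hint]
  have hs : Function.support (fun y : ℝ => |y|) = {0}ᶜ := by ext; simp
  rw [hs]
  have := nullSingletonClass_gaussianReal (μ := 0) (v := 1) one_ne_zero
  rw [prob_compl_eq_one_sub (measurableSet_singleton 0), measure_singleton]
  simp

lemma integral_abs_gauss (n : ℕ) :
    ∫ y, |y| ∂ gaussianReal 0 (n : ℝ≥0)⁻¹ = mAbs * (n : ℝ) ^ (-(1:ℝ)/2) := by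
  have h := gaussianReal_map_const_mul (μ := 0) (v := 1) (Real.sqrt ((n:ℝ)⁻¹))
  have h2 : (.mk ((Real.sqrt ((n:ℝ)⁻¹)) ^ 2) (sq_nonneg _) * 1 : ℝ≥0) = (n : ℝ≥0)⁻¹ := by
    ext
    simp [Real.sq_sqrt]
  rw [h2, mul_zero] at h
  rw [← h, integral_map (by fun_prop) (by fun_prop)]
  simp only [abs_mul]
  rw [integral_const_mul, abs_of_nonneg (Real.sqrt_nonneg _), mAbs, mul_comm]
  congr 1
  rw [Real.sqrt_inv, Real.sqrt_eq_rpow, ← Real.rpow_neg (by positivity)]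
  norm_num

lemma condMoment_eq (n k : ℕ) (τ : Fin k → ℝ) (s : ℝ) (ν : ℕ) :
    condMoment n k τ s ν = ∫ g, Aval k (fun i => τ i * |g.1 i|) (s * |g.2|) ν ∂ weightMeasure n k := rfl

lemma condMoment_lt (n k : ℕ) (τ : Fin k → ℝ) (s : ℝ) (ν : ℕ) (h : ν < k) :
    condMoment n k τ s ν = 0 := by
  rw [condMoment_eq]
  simp [(Aval_main k _ _).1 ν h]

lemma prod_int (n k : ℕ) (τ : Fin k → ℝ) :
    ∫ w : Fin k → ℝ, ∏ i, (τ i * |w i|) ∂ (Measure.pi fun _ : Fin k => gaussianReal 0 (n : ℝ≥0)⁻¹)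
      = (∏ i, τ i) * (mAbs * (n : ℝ) ^ (-(1:ℝ)/2)) ^ k := by
  rw [integral_fintype_prod_eq_prod (fun i y => τ i * |y|)]
  simp [integral_const_mul, integral_abs_gauss, Finset.prod_mul_distrib]

lemma condMoment_self (n k : ℕ) (τ : Fin k → ℝ) (s : ℝ) :
    condMoment n k τ s k = (k.factorial : ℝ) * ((∏ i, τ i) * (mAbs * (n : ℝ) ^ (-(1:ℝ)/2)) ^ k) := by
  rw [condMoment_eq]
  simp only [(Aval_main k _ _).2.1]
  rw [integral_const_mul, ← prod_int]
  unfold weightMeasure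
  have := integral_prod_mul (μ := (Measure.pi fun _ : Fin k => gaussianReal 0 (n : ℝ≥0)⁻¹))
    (ν := gaussianReal 0 (n : ℝ≥0)⁻¹) (fun w : Fin k → ℝ => ∏ i, (τ i * |w i|)) (fun _ => (1:ℝ))
  simp only [mul_one] at this
  rw [this]
  simp

lemma condMoment_succ (n k : ℕ) (τ : Fin k → ℝ) (s : ℝ) :
    condMoment n k τ s (k+1) = ((k+1).factorial : ℝ) *
      ((∏ i, τ i) * s * (mAbs * (n : ℝ) ^ (-(1:ℝ)/2)) ^ (k+1)) := by
  rw [condMoment_eq]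
  simp only [(Aval_main k _ _).2.2]
  rw [integral_const_mul]
  unfold weightMeasure
  have := integral_prod_mul (μ := (Measure.pi fun _ : Fin k => gaussianReal 0 (n : ℝ≥0)⁻¹))
    (ν := gaussianReal 0 (n : ℝ≥0)⁻¹) (fun w : Fin k → ℝ => ∏ i, (τ i * |w i|)) (fun y => s * |y|)
  rw [this, prod_int, integral_const_mul, integral_abs_gauss]
  ring

lemma poly_gauss_integrable (N : ℕ) (T b : ℝ) (hT : 0 ≤ T) (hb : 0 < b) :
    Integrable (fun u : ℝ => (|u| + T) ^ N * Real.exp (-b * u ^ 2)) := by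
  have h1 : Integrable (fun u : ℝ => |u| ^ N * Real.exp (-b * u ^ 2)) := by
    have := (integrable_rpow_mul_exp_neg_mul_sq hb (s := (N:ℝ))
      (by have : (0:ℝ) ≤ N := by positivity
          linarith)).norm
    refine this.congr (Filter.Eventually.of_forall fun u => ?_)
    simp
  have h2 : Integrable (fun u : ℝ => T ^ N * Real.exp (-b * u ^ 2)) :=
    (integrable_exp_neg_mul_sq hb).const_mul _
  refine ((h1.add h2).const_mul (2 ^ (N - 1))).mono' (by fun_prop)
    (Filter.Eventually.of_forall fun u => ?_)
  rw [Real.norm_of_nonneg (by positivity)]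
  have := add_pow_le (abs_nonneg u) hT N
  calc (|u| + T) ^ N * Real.exp (-b * u ^ 2)
      ≤ (2 ^ (N - 1) * (|u| ^ N + T ^ N)) * Real.exp (-b * u ^ 2) := by gcongr
    _ = _ := by simp only [Pi.add_apply]; ring

lemma sig_gauss_integrable {σ : ℝ → ℝ} (hm : Measurable σ) (hp : PolyBounded σ)
    (N : ℕ) (T b : ℝ) (hT : 0 ≤ T) (hb : 0 < b) :
    Integrable (fun u : ℝ => |σ u| * (|u| + T) ^ N * Real.exp (-b * u ^ 2)) := by
  obtain ⟨C, hC, c, hc, h⟩ := hp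
  have h1 := ((poly_gauss_integrable (c + N) T b hT hb).add
    (poly_gauss_integrable N T b hT hb)).const_mul C
  refine h1.mono' (by fun_prop) (Filter.Eventually.of_forall fun u => ?_)
  rw [Real.norm_of_nonneg (by positivity)]
  have h3 : |u| ^ c ≤ (|u| + T) ^ c := by gcongr; linarith
  have h2 : |σ u| ≤ C * (|u| + T) ^ c + C := (h u).trans (by gcongr)
  calc |σ u| * (|u| + T) ^ N * Real.exp (-b * u ^ 2)
      ≤ (C * (|u| + T) ^ c + C) * (|u| + T) ^ N * Real.exp (-b * u ^ 2) := by gcongr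
    _ = _ := by simp only [Pi.add_apply]; ring

/-- basic integrand -/
def Jf (σ : ℝ → ℝ) (a : ℕ) (w t u : ℝ) : ℝ :=
  σ u * (u - t) ^ a * Real.exp (-w * (u - t) ^ 2 / 2)

/-- basic integral -/
def Jint (σ : ℝ → ℝ) (a : ℕ) (w t : ℝ) : ℝ := ∫ u, Jf σ a w t u

lemma Jf_bound (σ : ℝ → ℝ) (a : ℕ) (w₀ w t T u : ℝ) (hw₀ : 0 < w₀) (hw : w₀ ≤ w) (ht : |t| ≤ T) :
    ‖Jf σ a w t u‖ ≤ Real.exp (w₀ * T ^ 2 / 2) * (|σ u| * (|u| + T) ^ a * Real.exp (-(w₀ / 4) * u ^ 2)) := by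
  have h1 : |u - t| ≤ |u| + T := (abs_sub _ _).trans (by linarith)
  have hT0 : 0 ≤ T := (abs_nonneg t).trans ht
  have hT : t ^ 2 ≤ T ^ 2 := by rw [← sq_abs t]; gcongr
  have h2 : Real.exp (-w * (u - t) ^ 2 / 2) ≤
      Real.exp (w₀ * T ^ 2 / 2) * Real.exp (-(w₀ / 4) * u ^ 2) := by
    rw [← Real.exp_add]
    apply Real.exp_le_exp.2
    have : w₀ * (u - t) ^ 2 ≤ w * (u - t) ^ 2 := by gcongr
    nlinarith [mul_nonneg hw₀.le (sq_nonneg (u - 2 * t)), mul_le_mul_of_nonneg_left hT hw₀.le]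
  unfold Jf
  rw [norm_mul, norm_mul, norm_pow, Real.norm_eq_abs, Real.norm_eq_abs,
    Real.norm_of_nonneg (Real.exp_pos _).le]
  calc |σ u| * |u - t| ^ a * Real.exp (-w * (u - t) ^ 2 / 2)
      ≤ |σ u| * (|u| + T) ^ a * (Real.exp (w₀ * T ^ 2 / 2) * Real.exp (-(w₀ / 4) * u ^ 2)) := by
        gcongr
    _ = _ := by ring

lemma Jf_meas {σ : ℝ → ℝ} (hm : Measurable σ) (a : ℕ) (w t : ℝ) :
    AEStronglyMeasurable (Jf σ a w t) := by
  unfold Jf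
  fun_prop

lemma Jf_integrable {σ : ℝ → ℝ} (hm : Measurable σ) (hp : PolyBounded σ)
    (a : ℕ) (w t : ℝ) (hw : 0 < w) : Integrable (Jf σ a w t) :=
  ((sig_gauss_integrable hm hp a |t| (w/4) (abs_nonneg t) (by positivity)).const_mul _).mono'
    (Jf_meas hm a w t) (Filter.Eventually.of_forall fun u =>
      Jf_bound σ a w w t |t| u hw le_rfl le_rfl)

lemma Jint_hasDerivAt_w {σ : ℝ → ℝ} (hm : Measurable σ) (hp : PolyBounded σ)
    (a : ℕ) (w t : ℝ) (hw : 0 < w) :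
    HasDerivAt (fun w => Jint σ a w t) (∫ u, -(1/2) * Jf σ (a+2) w t u) w := by
  refine (hasDerivAt_integral_of_dominated_loc_of_deriv_le (F := fun w u => Jf σ a w t u)
    (F' := fun w u => -(1/2) * Jf σ (a+2) w t u) (s := Set.Ioi (w/2))
    (bound := fun u => (1/2) * (Real.exp (w/2 * |t| ^ 2 / 2) * (|σ u| * (|u| + |t|) ^ (a+2) *
      Real.exp (-(w/2 / 4) * u ^ 2)))) (Ioi_mem_nhds (by linarith))
    (Filter.Eventually.of_forall fun w => Jf_meas hm a w t) (Jf_integrable hm hp a w t hw)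
    ((Jf_meas hm _ w t).const_mul _) ?_ ?_ ?_).2
  · refine Filter.Eventually.of_forall fun u w' hw' => ?_
    rw [norm_mul]
    have := Jf_bound σ (a+2) (w/2) w' t |t| u (by positivity) (le_of_lt hw') le_rfl
    norm_num
    norm_num at this
    exact this
  · exact ((sig_gauss_integrable hm hp _ _ _ (abs_nonneg t) (by positivity)).const_mul _).const_mul _
  · refine Filter.Eventually.of_forall fun u w' hw' => ?_
    unfold Jf
    have h : HasDerivAt (fun w : ℝ => -w * (u - t) ^ 2 / 2) (-1 * (u - t) ^ 2 / 2) w' :=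
      (((hasDerivAt_id w').neg).mul_const _).div_const _
    have := (h.exp).const_mul (σ u * (u - t) ^ a)
    refine this.congr_deriv ?_
    ring

lemma Jint_hasDerivAt_t {σ : ℝ → ℝ} (hm : Measurable σ) (hp : PolyBounded σ)
    (a : ℕ) (w t : ℝ) (hw : 0 < w) :
    HasDerivAt (fun t => Jint σ a w t) (-a * Jint σ (a-1) w t + w * Jint σ (a+1) w t) t := by
  have h := (hasDerivAt_integral_of_dominated_loc_of_deriv_le (μ := volume)
    (F := fun t u => Jf σ a w t u) (x₀ := t)
    (F' := fun t u => -a * Jf σ (a-1) w t u + w * Jf σ (a+1) w t u) (s := Metric.ball t 1)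
    (bound := fun u => a * (Real.exp (w * (|t|+1) ^ 2 / 2) * (|σ u| * (|u| + (|t|+1)) ^ (a-1) *
      Real.exp (-(w / 4) * u ^ 2))) + w * (Real.exp (w * (|t|+1) ^ 2 / 2) *
        (|σ u| * (|u| + (|t|+1)) ^ (a+1) *
      Real.exp (-(w / 4) * u ^ 2)))) (Metric.ball_mem_nhds t one_pos)
    (Filter.Eventually.of_forall fun t => Jf_meas hm a w t) (Jf_integrable hm hp a w t hw)
    (((Jf_meas hm _ w t).const_mul _).add ((Jf_meas hm _ w t).const_mul _)) ?_ ?_ ?_).2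
  · refine h.congr_deriv ?_
    rw [integral_add ((Jf_integrable hm hp _ w t hw).const_mul _)
      ((Jf_integrable hm hp _ w t hw).const_mul _), integral_const_mul, integral_const_mul]
    rfl
  · refine Filter.Eventually.of_forall fun u t' ht' => ?_
    have ht2 : |t'| ≤ |t| + 1 := by
      rw [Metric.mem_ball, Real.dist_eq] at ht'
      have := abs_sub_abs_le_abs_sub t' t
      linarith
    refine (norm_add_le _ _).trans ?_
    rw [norm_mul, norm_mul, norm_neg, Real.norm_of_nonneg hw.le, Real.norm_of_nonneg (Nat.cast_nonneg a)]
    gcongr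
    · exact Jf_bound σ (a-1) w w t' _ u hw le_rfl ht2
    · exact Jf_bound σ (a+1) w w t' _ u hw le_rfl ht2
  · exact (((sig_gauss_integrable hm hp _ _ _ (by positivity) (by positivity)).const_mul _).const_mul _).add
      (((sig_gauss_integrable hm hp _ _ _ (by positivity) (by positivity)).const_mul _).const_mul _)
  · refine Filter.Eventually.of_forall fun u t' ht' => ?_
    unfold Jf
    have h0 : HasDerivAt (fun t : ℝ => u - t) (-1) t' := (hasDerivAt_id t').const_sub u
    have h1 := (h0.pow a).const_mul (σ u)
    have h2 : HasDerivAt (fun t : ℝ => Real.exp (-w * (u - t) ^ 2 / 2)) _ t' :=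
      ((((h0.pow 2).const_mul (-w)).div_const 2)).exp
    refine (h1.mul h2).congr_deriv ?_
    simp only [Pi.pow_apply]
    push_cast
    ring

/-- The class of functions spanned by `w ^ b * Jint σ a`. -/
inductive GoodFn (σ : ℝ → ℝ) : (ℝ → ℝ → ℝ) → Prop
  | base (a : ℕ) : GoodFn σ (Jint σ a)
  | smul (c : ℝ) (F : ℝ → ℝ → ℝ) : GoodFn σ F → GoodFn σ (fun w t => c * F w t)
  | wmul (F : ℝ → ℝ → ℝ) : GoodFn σ F → GoodFn σ (fun w t => w * F w t)
  | add (F G : ℝ → ℝ → ℝ) : GoodFn σ F → GoodFn σ G → GoodFn σ (fun w t => F w t + G w t)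

lemma GoodFn.deriv {σ : ℝ → ℝ} (hm : Measurable σ) (hp : PolyBounded σ) {F : ℝ → ℝ → ℝ}
    (h : GoodFn σ F) : ∃ G, GoodFn σ G ∧ ∀ w > 0, ∀ t, HasDerivAt (F w) (G w t) t := by
  induction h with
  | base a =>
    exact ⟨_, ((GoodFn.base (a-1)).smul (-a)).add _ _ ((GoodFn.base (a+1)).wmul),
      fun w hw t => Jint_hasDerivAt_t hm hp a w t hw⟩
  | smul c F hF ih =>
    obtain ⟨G, hG, h⟩ := ih
    exact ⟨_, hG.smul c, fun w hw t => (h w hw t).const_mul c⟩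
  | wmul F hF ih =>
    obtain ⟨G, hG, h⟩ := ih
    exact ⟨_, hG.wmul, fun w hw t => (h w hw t).const_mul w⟩
  | add F₁ F₂ h₁ h₂ ih₁ ih₂ =>
    obtain ⟨G₁, hG₁, h₁⟩ := ih₁
    obtain ⟨G₂, hG₂, h₂⟩ := ih₂
    exact ⟨_, hG₁.add _ _ hG₂, fun w hw t => (h₁ w hw t).add (h₂ w hw t)⟩

lemma GoodFn.iter {σ : ℝ → ℝ} (hm : Measurable σ) (hp : PolyBounded σ) (ν : ℕ) :
    ∀ {F : ℝ → ℝ → ℝ}, GoodFn σ F →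
      ∃ G, GoodFn σ G ∧ ∀ w > 0, iteratedDeriv ν (F w) = G w := by
  induction ν with
  | zero => intro F h; exact ⟨F, h, fun w _ => by simp⟩
  | succ ν ih =>
    intro F h
    obtain ⟨G, hG, hd⟩ := h.deriv hm hp
    obtain ⟨H, hH, hi⟩ := ih hG
    refine ⟨H, hH, fun w hw => ?_⟩
    rw [iteratedDeriv_succ', ← hi w hw]
    congr 1
    funext t
    exact (hd w hw t).deriv

lemma GoodFn.diff {σ : ℝ → ℝ} (hm : Measurable σ) (hp : PolyBounded σ) {F : ℝ → ℝ → ℝ}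
    (h : GoodFn σ F) : DifferentiableAt ℝ (fun w => F w 0) 1 := by
  induction h with
  | base a => exact (Jint_hasDerivAt_w hm hp a 1 0 one_pos).differentiableAt
  | smul c F hF ih => exact ih.const_mul c
  | wmul F hF ih => exact differentiableAt_id.mul ih
  | add F₁ F₂ h₁ h₂ ih₁ ih₂ => exact ih₁.add ih₂

lemma gsmooth_eq (σ : ℝ → ℝ) (v : ℝ) (hv : 0 < v) (t : ℝ) :
    gsmooth σ v t = (Real.sqrt (2 * Real.pi * v))⁻¹ * Jint σ 0 v⁻¹ t := by
  unfold gsmooth Jint Jf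
  rw [integral_gaussianReal_eq_integral_smul (by simpa using hv), ← integral_const_mul,
    ← integral_sub_right_eq_self _ t]
  congr 1
  funext u
  rw [gaussianPDFReal, Real.coe_toNNReal _ hv.le, smul_eq_mul]
  have : -(u - t - 0) ^ 2 / (2 * v) = -v⁻¹ * (u - t) ^ 2 / 2 := by
    field_simp
    ring
  rw [this]
  simp only [sub_add_cancel, pow_zero]
  ring

lemma smooth_diff {σ : ℝ → ℝ} (hm : Measurable σ) (hp : PolyBounded σ) (ν : ℕ) :
    DifferentiableAt ℝ (fun v => iteratedDeriv ν (gsmooth σ v) 0) 1 := by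
  obtain ⟨G, hG, hi⟩ := GoodFn.iter hm hp ν (GoodFn.base (σ := σ) 0)
  have hd : DifferentiableAt ℝ (fun v : ℝ => (Real.sqrt (2 * Real.pi * v))⁻¹ * G v⁻¹ 0) 1 := by
    have h1 : DifferentiableAt ℝ (fun v : ℝ => (Real.sqrt (2 * Real.pi * v))⁻¹) 1 := by
      have hpos : (2 * Real.pi * 1 : ℝ) ≠ 0 := by positivity
      refine DifferentiableAt.inv (DifferentiableAt.sqrt (by fun_prop) hpos) ?_
      positivity
    have h2 : DifferentiableAt ℝ (fun v : ℝ => G v⁻¹ 0) 1 := by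
      have h3 := hG.diff hm hp
      refine DifferentiableAt.comp (g := fun w => G w 0) (f := fun v : ℝ => v⁻¹) 1 ?_
        (differentiableAt_inv one_ne_zero)
      simpa using h3
    exact h1.mul h2
  refine hd.congr_of_eventuallyEq ?_
  filter_upwards [Ioi_mem_nhds (show (0:ℝ) < 1 by norm_num)] with v hv
  have : gsmooth σ v = fun t => (Real.sqrt (2 * Real.pi * v))⁻¹ * Jint σ 0 v⁻¹ t :=
    funext (gsmooth_eq σ v hv)
  rw [this, iteratedDeriv_const_mul_field, ← hi _ (inv_pos.2 hv)]

lemma smooth_bound {σ : ℝ → ℝ} (hm : Measurable σ) (hp : PolyBounded σ) (k ν : ℕ) :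
    ∃ K : ℝ, 0 < K ∧ ∃ n₀ : ℕ, ∀ n : ℕ, n₀ ≤ n →
      |iteratedDeriv ν (gsmooth σ (1 - (k : ℝ) / n)) 0 - iteratedDeriv ν (gsmooth σ 1) 0| ≤ K / n := by
  obtain ⟨K, hK, h⟩ := ((smooth_diff hm hp ν).isBigO_sub).exists_pos
  have ht : Tendsto (fun n : ℕ => 1 - (k:ℝ) / n) atTop (nhds 1) := by
    simpa using (tendsto_const_div_atTop_nhds_zero_nat (k:ℝ)).const_sub 1
  obtain ⟨n₀, hn₀⟩ := eventually_atTop.1 (ht.eventually h.bound)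
  refine ⟨K * (k + 1), by positivity, n₀, fun n hn => (hn₀ n hn).trans ?_⟩
  have : ‖(1 - (k:ℝ) / n) - 1‖ = (k:ℝ) / n := by
    rw [sub_sub_cancel_left, norm_neg, Real.norm_of_nonneg (by positivity)]
  rw [this, mul_div_assoc]
  gcongr
  linarith

lemma rpow_half (n P : ℕ) : (n : ℝ) ^ (-(P : ℝ) / 2) = ((n : ℝ) ^ (-(1:ℝ)/2)) ^ P := by
  rw [← Real.rpow_natCast, ← Real.rpow_mul (by positivity)]
  congr 1
  ring

lemma rpow_half' (n P : ℕ) : (n : ℝ) ^ (-(P : ℝ) / 2 - 1 / 2) = ((n : ℝ) ^ (-(1:ℝ)/2)) ^ (P + 1) := by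
  rw [← rpow_half]
  congr 1
  push_cast
  ring

lemma sign_prod {k : ℕ} (τ : Fin k → ℝ) (h : ∀ i, IsSign (τ i)) : IsSign (∏ i, τ i) := by
  refine Finset.prod_induction τ IsSign ?_ (Or.inl rfl) (fun i _ => h i)
  rintro a b (rfl | rfl) (rfl | rfl) <;> simp [IsSign]

lemma IsSign.mul' {a b : ℝ} (ha : IsSign a) (hb : IsSign b) : IsSign (a * b) := by
  rcases ha with rfl | rfl <;> rcases hb with rfl | rfl <;> simp [IsSign]

lemma IsSign.abs_eq {a : ℝ} (ha : IsSign a) : |a| = 1 := by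
  rcases ha with rfl | rfl <;> simp

/-- exponent of a sign -/
def sgnExp (q : ℝ) : ℤ := if q = 1 then 0 else 1

lemma sgnExp_spec {q : ℝ} (hq : IsSign q) : (-1 : ℝ) ^ (sgnExp q) = q := by
  rcases hq with rfl | rfl <;> norm_num [sgnExp]

/-- Dominant term of the Taylor part: for expressive `σ`, with `P` the first
index `≥ k` where `Σ^{(P)}(0) ≠ 0`, `Σ_n := Σ_{1-k/n}` and `a_{ν,n} := Σ_n^{(ν)}(0)/ν!`,
conditionally on any fixed signs,
`Σ_{ν=0}^P a_{ν,n} E[M_k(x) G^ν] = C(P) (−1)^{C'(τ,sign b)} n^{-P/2} + O(n^{-P/2-1/2})`,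
uniformly over the signs. -/
theorem taylor_dominant_term
    (σ : ℝ → ℝ) (hσ : Expressive σ) (k P : ℕ) (hkP : k ≤ P)
    (hP : iteratedDeriv P (gsmooth σ 1) 0 ≠ 0)
    (hfirst : ∀ Q : ℕ, k ≤ Q → Q < P → iteratedDeriv Q (gsmooth σ 1) 0 = 0) :
    ∃ C : ℝ, C ≠ 0 ∧ ∃ C' : (Fin k → ℝ) → ℝ → ℤ, ∃ C₀ : ℝ, 0 < C₀ ∧ ∃ n₀ : ℕ,
      ∀ n : ℕ, n₀ ≤ n →
        ∀ τ : Fin k → ℝ, (∀ i, IsSign (τ i)) → ∀ s : ℝ, IsSign s →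
          |(∑ ν ∈ Finset.range (P + 1),
                iteratedDeriv ν (gsmooth σ (1 - (k : ℝ) / n)) 0 / (ν.factorial : ℝ) *
                  condMoment n k τ s ν) -
              C * (-1 : ℝ) ^ (C' τ s) * (n : ℝ) ^ (-(P : ℝ) / 2)| ≤
            C₀ * (n : ℝ) ^ (-(P : ℝ) / 2 - 1 / 2) := by
  obtain ⟨hm, hp, hexp⟩ := hσ
  have hm0 := mAbs_pos
  have hPk : P = k ∨ P = k + 1 := by
    by_contra hcon
    push Not at hcon
    rcases hexp k with h | h
    · exact h (hfirst k le_rfl (by omega))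
    · exact h (hfirst (k+1) (by omega) (by omega))
  have hr : ∀ n : ℕ, 1 ≤ n → 0 < (n : ℝ) ^ (-(1:ℝ)/2) ∧ (n : ℝ) ^ (-(1:ℝ)/2) ≤ 1 ∧
      ∀ K : ℝ, K / n = K * ((n : ℝ) ^ (-(1:ℝ)/2)) ^ 2 := by
    intro n hn
    have hn' : (1:ℝ) ≤ n := by exact_mod_cast hn
    refine ⟨by positivity, Real.rpow_le_one_of_one_le_of_nonpos hn' (by norm_num), fun K => ?_⟩
    rw [← rpow_half, div_eq_mul_inv]
    norm_num [Real.rpow_neg_one]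
  rcases hPk with rfl | rfl
  · obtain ⟨K, hK, n₀, hb⟩ := smooth_bound hm hp P P
    refine ⟨iteratedDeriv P (gsmooth σ 1) 0 * mAbs ^ P, by positivity,
      fun τ _ => sgnExp (∏ i, τ i), K * mAbs ^ P, by positivity, max n₀ 1, ?_⟩
    intro n hn τ hτ s hs
    obtain ⟨hr0, hr1, hr2⟩ := hr n (le_trans (le_max_right _ _) hn)
    have hb' := hb n (le_trans (le_max_left _ _) hn)
    rw [hr2 K] at hb'
    have hq := sign_prod τ hτ
    rw [Finset.sum_range_succ, Finset.sum_eq_zero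
      (fun ν hν => by rw [condMoment_lt _ _ _ _ _ (Finset.mem_range.1 hν), mul_zero]),
      condMoment_self, sgnExp_spec hq, rpow_half, rpow_half']
    generalize (n : ℝ) ^ (-(1:ℝ)/2) = r at *
    generalize iteratedDeriv P (gsmooth σ (1 - (P : ℝ) / n)) 0 = a at *
    generalize iteratedDeriv P (gsmooth σ 1) 0 = D at *
    have hf : (P.factorial : ℝ) ≠ 0 := by positivity
    have e : 0 + a / (P.factorial : ℝ) * ((P.factorial : ℝ) * ((∏ i, τ i) * (mAbs * r) ^ P)) -
        D * mAbs ^ P * (∏ i, τ i) * r ^ P = (a - D) * (∏ i, τ i) * (mAbs ^ P * r ^ P) := by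
      field_simp
      ring
    rw [e, abs_mul, abs_mul, hq.abs_eq, abs_of_pos (show 0 < mAbs ^ P * r ^ P by positivity), mul_one]
    calc |a - D| * (mAbs ^ P * r ^ P) ≤ (K * r ^ 2) * (mAbs ^ P * r ^ P) := by gcongr
      _ = K * mAbs ^ P * r ^ (P + 1) * r := by ring
      _ ≤ K * mAbs ^ P * r ^ (P + 1) * 1 := by gcongr
      _ = _ := by ring
  · obtain ⟨K₁, hK₁, n₁, hb₁⟩ := smooth_bound hm hp k k
    obtain ⟨K₂, hK₂, n₂, hb₂⟩ := smooth_bound hm hp k (k+1)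
    rw [hfirst k le_rfl (by omega)] at hb₁
    refine ⟨iteratedDeriv (k+1) (gsmooth σ 1) 0 * mAbs ^ (k+1), by positivity,
      fun τ s => sgnExp ((∏ i, τ i) * s), K₁ * mAbs ^ k + K₂ * mAbs ^ (k+1), by positivity,
      max (max n₁ n₂) 1, ?_⟩
    intro n hn τ hτ s hs
    obtain ⟨hr0, hr1, hr2⟩ := hr n (le_trans (le_max_right _ _) hn)
    have hb₁' := hb₁ n (by omega)
    have hb₂' := hb₂ n (by omega)
    rw [hr2 K₁, sub_zero] at hb₁'
    rw [hr2 K₂] at hb₂'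
    have hq := sign_prod τ hτ
    have hqs := hq.mul' hs
    rw [Finset.sum_range_succ, Finset.sum_range_succ, Finset.sum_eq_zero
      (fun ν hν => by rw [condMoment_lt _ _ _ _ _ (Finset.mem_range.1 hν), mul_zero]),
      condMoment_self, condMoment_succ, sgnExp_spec hqs, rpow_half, rpow_half']
    generalize (n : ℝ) ^ (-(1:ℝ)/2) = r at *
    generalize iteratedDeriv k (gsmooth σ (1 - (k : ℝ) / n)) 0 = a at *
    generalize iteratedDeriv (k+1) (gsmooth σ (1 - (k : ℝ) / n)) 0 = b at *
    generalize iteratedDeriv (k+1) (gsmooth σ 1) 0 = D at *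
    have hf : (k.factorial : ℝ) ≠ 0 := by positivity
    have hf' : ((k+1).factorial : ℝ) ≠ 0 := by positivity
    have e : 0 + a / (k.factorial : ℝ) * ((k.factorial : ℝ) * ((∏ i, τ i) * (mAbs * r) ^ k)) +
        b / ((k+1).factorial : ℝ) * (((k+1).factorial : ℝ) * ((∏ i, τ i) * s * (mAbs * r) ^ (k+1))) -
        D * mAbs ^ (k+1) * ((∏ i, τ i) * s) * r ^ (k+1) =
        a * (∏ i, τ i) * (mAbs ^ k * r ^ k) +
          (b - D) * ((∏ i, τ i) * s) * (mAbs ^ (k+1) * r ^ (k+1)) := by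
      rw [← mul_assoc (a / _), ← mul_assoc (b / _), div_mul_cancel₀ _ hf, div_mul_cancel₀ _ hf']
      ring
    rw [e]
    refine (abs_add_le _ _).trans ?_
    rw [abs_mul, abs_mul, abs_mul (_ * _) (mAbs ^ (k+1) * r ^ (k+1)), abs_mul (b - D), hq.abs_eq,
      hqs.abs_eq, abs_of_pos (show 0 < mAbs ^ k * r ^ k by positivity),
      abs_of_pos (show 0 < mAbs ^ (k+1) * r ^ (k+1) by positivity), mul_one, mul_one]
    calc |a| * (mAbs ^ k * r ^ k) + |b - D| * (mAbs ^ (k+1) * r ^ (k+1))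
        ≤ (K₁ * r ^ 2) * (mAbs ^ k * r ^ k) + (K₂ * r ^ 2) * (mAbs ^ (k+1) * r ^ (k+1)) := by gcongr
      _ = K₁ * mAbs ^ k * r ^ (k + 1 + 1) + K₂ * mAbs ^ (k+1) * r ^ (k + 1 + 1) * r := by ring
      _ ≤ K₁ * mAbs ^ k * r ^ (k + 1 + 1) + K₂ * mAbs ^ (k+1) * r ^ (k + 1 + 1) * 1 := by gcongr
      _ = _ := by ring
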